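/- Let D ≥ 2, let A be a real symmetric positive definite D×D matrix, let N ∈ ℝ^D with ‖N‖ = 1, let d₀ > 0, and let s > 0. Then the ellipsoid {y ∈ ℝ^D : yᵀA⁻¹y = 2s²} has nonempty intersection with the hyperplane {y ∈ ℝ^D : Nᵀy = d₀} if and only if s ≥ d₀/√(2 NᵀA N). In particular, the smallest such s (the tangent-ellipsoid radius of the Walk on Ellipsoids method under the half-space approximation) is r̂ = d₀/√(2 NᵀA N). -/

import Mathlib

open Matrix

theorem aux_w (D : ℕ) (hD : 2 ≤ D) (n : Fin D → ℝ) : ∃ w : Fin D → ℝ, w ≠ 0 ∧ n ⬝ᵥ w = 0 := by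
  have h : LinearMap.ker (Matrix.mulVecLin (Matrix.of (fun (_ : Fin 1) => n))) ≠ ⊥ := by
    apply LinearMap.ker_ne_bot_of_finrank_lt
    simp
    omega
  obtain ⟨w, hw, hw0⟩ := (Submodule.ne_bot_iff _).1 h
  refine ⟨w, hw0, ?_⟩
  have := congrFun (LinearMap.mem_ker.1 hw) 0
  simpa [Matrix.mulVec] using this

theorem aux_main (D : ℕ) (hD : 2 ≤ D)
    (A : Matrix (Fin D) (Fin D) ℝ) (hA : A.PosDef)
    (n : Fin D → ℝ) (hn : n ≠ 0)
    (d₀ : ℝ) (hd₀ : 0 < d₀) (s : ℝ) (hs : 0 < s) :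
    (∃ y : Fin D → ℝ, y ⬝ᵥ A⁻¹.mulVec y = 2 * s ^ 2 ∧ n ⬝ᵥ y = d₀) ↔
      d₀ / Real.sqrt (2 * (n ⬝ᵥ A.mulVec n)) ≤ s := by
  have hq : 0 < n ⬝ᵥ A.mulVec n := by simpa using hA.dotProduct_mulVec_pos hn
  have hu : A⁻¹ *ᵥ (A *ᵥ n) = n := by
    rw [Matrix.mulVec_mulVec, Matrix.nonsing_inv_mul _ ((Matrix.isUnit_iff_isUnit_det _).1 hA.isUnit),
      Matrix.one_mulVec]
  have hsym : A⁻¹ᵀ = A⁻¹ := by simpa using hA.inv.isHermitian.eq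
  have hpos : ∀ w : Fin D → ℝ, w ≠ 0 → 0 < w ⬝ᵥ A⁻¹ *ᵥ w := fun w hw => by
    simpa using hA.inv.dotProduct_mulVec_pos hw
  have hu2 : ∀ w : Fin D → ℝ, (A *ᵥ n) ⬝ᵥ A⁻¹ *ᵥ w = n ⬝ᵥ w := fun w => by
    rw [Matrix.dotProduct_mulVec, ← Matrix.mulVec_transpose, hsym, hu]
  generalize hU : A *ᵥ n = u at *
  generalize hQ : n ⬝ᵥ u = q at *
  -- completing the square
  have key : ∀ (c : ℝ) (w : Fin D → ℝ), (c • u + w) ⬝ᵥ A⁻¹ *ᵥ (c • u + w)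
      = c ^ 2 * q + 2 * c * (n ⬝ᵥ w) + w ⬝ᵥ A⁻¹ *ᵥ w := fun c w => by
    simp only [Matrix.mulVec_add, Matrix.mulVec_smul, add_dotProduct, dotProduct_add,
      smul_dotProduct, dotProduct_smul, hu, hu2, smul_eq_mul, dotProduct_comm w n,
      dotProduct_comm u n, hQ]
    ring
  have hR : d₀ / Real.sqrt (2 * q) ≤ s ↔ d₀ ^ 2 / q ≤ 2 * s ^ 2 := by
    rw [div_le_iff₀ (by positivity), div_le_iff₀ hq, ← sq_le_sq₀ hd₀.le (by positivity), mul_pow,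
      Real.sq_sqrt (by positivity)]
    ring_nf
  rw [hR]
  constructor
  · rintro ⟨y, hy, hny⟩
    have h1 := key (d₀ / q) (y - (d₀ / q) • u)
    have h2 : 0 ≤ (y - (d₀ / q) • u) ⬝ᵥ A⁻¹ *ᵥ (y - (d₀ / q) • u) := by
      by_cases h : y - (d₀ / q) • u = 0
      · simp [h]
      · exact (hpos _ h).le
    have h3 : n ⬝ᵥ (y - (d₀ / q) • u) = 0 := by
      rw [dotProduct_sub, dotProduct_smul, hQ, hny, smul_eq_mul]
      field_simp
      simp
    rw [add_sub_cancel, hy, h3] at h1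
    have h4 : (d₀ / q) ^ 2 * q = d₀ ^ 2 / q := by field_simp
    linarith
  · intro h
    obtain ⟨w, hw, hnw⟩ := aux_w D hD n
    have hp := hpos w hw
    have h4 : (d₀ / q) ^ 2 * q = d₀ ^ 2 / q := by field_simp
    refine ⟨(d₀ / q) • u + Real.sqrt ((2 * s ^ 2 - d₀ ^ 2 / q) / (w ⬝ᵥ A⁻¹ *ᵥ w)) • w, ?_, ?_⟩
    · rw [key, h4]
      simp only [Matrix.mulVec_smul, dotProduct_smul, smul_dotProduct, hnw, smul_eq_mul]
      rw [mul_zero, ← mul_assoc, Real.mul_self_sqrt (div_nonneg (by linarith) hp.le),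
        div_mul_cancel₀ _ hp.ne']
      ring
    · simp only [dotProduct_add, dotProduct_smul, hnw, hQ, smul_eq_mul]
      field_simp
      simp

/-- Half-space computation of the tangent-ellipsoid radius in the Walk on
Ellipsoids method: the ellipsoid `{y : yᵀA⁻¹y = 2s²}` meets the hyperplane
`{y : Nᵀy = d₀}` iff `s ≥ d₀/√(2 NᵀAN)`. -/
theorem stmt_8 (D : ℕ) (hD : 2 ≤ D)
    (A : Matrix (Fin D) (Fin D) ℝ) (hA : A.PosDef)
    (N : EuclideanSpace ℝ (Fin D)) (hN : ‖N‖ = 1)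
    (d₀ : ℝ) (hd₀ : 0 < d₀) (s : ℝ) (hs : 0 < s) :
    (∃ y : Fin D → ℝ, y ⬝ᵥ A⁻¹.mulVec y = 2 * s ^ 2 ∧ N ⬝ᵥ y = d₀) ↔
      d₀ / Real.sqrt (2 * (N ⬝ᵥ A.mulVec N)) ≤ s := by
  refine aux_main D hD A hA N.ofLp ?_ d₀ hd₀ s hs
  intro h
  have h0 : N = 0 := by
    ext i
    exact congrFun h i
  simp [h0] at hN
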